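/- Let m ≡ 0 (mod 4) and let e be an integer with 1 ≤ e ≤ m/2 and gcd(m,e) = 2. Then the number of codewords of Hamming weight 8 in the extended code C̄_E equals Ā_8 = 2^{m−3}(2^m − 1)(2^{4m−4} − 27·2^{3m−4} + 23·2^{2m−1} + 261·2^{m−2} + 403)/315. -/

import Mathlib

open Polynomial Finset

/-- The polynomial `c₀ + c₁x + ⋯ + c_{n−1}x^{n−1}` associated to a vector. -/
noncomputable def codePoly {n : ℕ} (c : Fin n → ZMod 2) : Polynomial (ZMod 2) :=
  ∑ i : Fin n, Polynomial.C (c i) * Polynomial.X ^ (i : ℕ)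

/-- The generator polynomial `g_E(x) = M_α(x) · M_{α^{1+2^e}}(x)`. -/
noncomputable def gE (m e : ℕ) (α : GaloisField 2 m) : Polynomial (ZMod 2) :=
  minpoly (ZMod 2) α * minpoly (ZMod 2) (α ^ (1 + 2 ^ e))

/-- The binary cyclic code `C_E` of length `2^m − 1` with generator polynomial `g_E`. -/
def CE (m e : ℕ) (α : GaloisField 2 m) : Set (Fin (2 ^ m - 1) → ZMod 2) :=
  {c | gE m e α ∣ codePoly c}

/-- The extended code `C̄_E ⊆ F_2^{2^m}`: the first `2^m − 1` coordinates form a codeword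
of `C_E` and all `2^m` coordinates sum to zero. -/
def CEbar (m e : ℕ) (α : GaloisField 2 m) : Set (Fin (2 ^ m) → ZMod 2) :=
  {c | (fun i : Fin (2 ^ m - 1) => c (Fin.castLE (Nat.sub_le _ _) i)) ∈ CE m e α ∧
       ∑ i, c i = 0}

/-!
By orthogonality of characters, `q ^ 2` times the number of codewords of weight `8` (`q = 2 ^ m`) is
the sum over all `a`, `b` of the eighth elementary symmetric function of the signs
`ψ (a x ^ (1 + 2 ^ e) + b x)`, `x ∈ 𝔽_q`. The square of a sign is `1`, so Newton's identities make
this symmetric function a polynomial in the sum `S(a, b)` of the signs. The signs are quadratic in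
`x`, whence `S(a, b) ^ 4 = q |R_a| S(a, b) ^ 2`, where `R_a` is the radical of the polarization, and
Parseval's identity gives `∑_b S(a, b) ^ 2 = q ^ 2`. All moments of `S` thus reduce to the moments
of `|R_a|`. For `a ≠ 0` the nonzero elements of `R_a` are the solutions of a binomial equation
in the cyclic group `𝔽_q^×`, which has either none or `2 ^ gcd(m, 2e) - 1` of them.
-/

section SymmetricFunctionsOfSigns

open MvPolynomial (esymm psum)

variable {ι R : Type*} [Fintype ι] [CommRing R] {f : ι → R}

theorem aeval_psum_add_two_of_mul_self_eq_one (hf : ∀ i, f i * f i = 1) (k : ℕ) :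
    MvPolynomial.aeval f (psum ι R (k + 2)) = MvPolynomial.aeval f (psum ι R k) := by
  simp [psum, pow_add, pow_two, hf]

theorem mul_aeval_esymm_eq_sum_range (f : ι → R) (k : ℕ) :
    k * MvPolynomial.aeval f (esymm ι R k) = (-1) ^ (k + 1) * ∑ i ∈ range k,
      (-1) ^ i * MvPolynomial.aeval f (esymm ι R i) * MvPolynomial.aeval f (psum ι R (k - i)) := by
  have newton := congrArg (MvPolynomial.aeval f) (MvPolynomial.mul_esymm_eq_sum ι R k)
  rw [sum_filter, Nat.sum_antidiagonal_eq_sum_range_succ_mk, sum_range_succ] at newton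
  simp only [lt_self_iff_false, if_false, add_zero] at newton
  rw [sum_congr rfl fun i hi => if_pos (mem_range.mp hi)] at newton
  simpa only [map_mul, map_sum, map_pow, map_neg, map_one, map_natCast] using newton

-- The power sums of signs have period `2`, so Newton's identities for `k + 2` and `k` have the
-- same tail.
theorem add_two_mul_aeval_esymm_of_mul_self_eq_one (hf : ∀ i, f i * f i = 1) (k : ℕ) :
    (k + 2) * MvPolynomial.aeval f (esymm ι R (k + 2)) =
      (∑ i, f i) * MvPolynomial.aeval f (esymm ι R (k + 1)) -
        (Fintype.card ι - k) * MvPolynomial.aeval f (esymm ι R k) := by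
  have tail : ∑ i ∈ range k, (-1) ^ i * MvPolynomial.aeval f (esymm ι R i) *
        MvPolynomial.aeval f (psum ι R (k + 2 - i)) =
      ∑ i ∈ range k, (-1) ^ i * MvPolynomial.aeval f (esymm ι R i) *
        MvPolynomial.aeval f (psum ι R (k - i)) := by
    refine sum_congr rfl fun i hi => ?_
    rw [Nat.sub_add_comm (mem_range.mp hi).le, aeval_psum_add_two_of_mul_self_eq_one hf]
  have psum_one : MvPolynomial.aeval f (psum ι R 1) = ∑ i, f i := by simp [psum]
  have psum_two : MvPolynomial.aeval f (psum ι R 2) = Fintype.card ι := by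
    simp [psum, pow_two, hf]
  have newton := mul_aeval_esymm_eq_sum_range f (k + 2)
  rw [sum_range_succ, sum_range_succ, tail, show k + 2 - (k + 1) = 1 by omega,
    Nat.add_sub_cancel_left, psum_one, psum_two] at newton
  have sign : (-1 : R) ^ k * (-1) ^ k = 1 := by rw [← mul_pow]; simp
  push_cast at newton
  linear_combination newton - mul_aeval_esymm_eq_sum_range f k +
    ((∑ i, f i) * MvPolynomial.aeval f (esymm ι R (k + 1)) -
      Fintype.card ι * MvPolynomial.aeval f (esymm ι R k)) * sign

theorem factorial_mul_aeval_esymm_eight_of_mul_self_eq_one (hf : ∀ i, f i * f i = 1) {s n : R}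
    (hs : ∑ i, f i = s) (hn : Fintype.card ι = n) :
    Nat.factorial 8 * MvPolynomial.aeval f (esymm ι R 8) = s ^ 8 - 28 * (n - 4) * s ^ 6
      + (210 * n ^ 2 - 1540 * n + 2464) * s ^ 4
      - (420 * n ^ 3 - 4200 * n ^ 2 + 11872 * n - 8448) * s ^ 2
      + 105 * n * (n - 2) * (n - 4) * (n - 6) := by
  set E : ℕ → R := fun k => Nat.factorial k * MvPolynomial.aeval f (esymm ι R k) with hE
  have E_zero : E 0 = 1 := by simp [hE]
  have E_one : E 1 = s := by simp [hE, ← hs]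
  have E_add_two (k : ℕ) : E (k + 2) = s * E (k + 1) - (k + 1) * (n - k) * E k := by
    have recurrence := add_two_mul_aeval_esymm_of_mul_self_eq_one hf k
    rw [hs, hn] at recurrence
    simp only [hE, Nat.factorial_succ]
    push_cast
    linear_combination ((k + 1) * Nat.factorial k : R) * recurrence
  change E 8 = _
  simp only [E_add_two, E_zero, E_one]
  push_cast
  ring

end SymmetricFunctionsOfSigns

section Orthogonality

/-- The `k`-element sets over which both `g` and `h` sum to zero. When `g` and `h` list the entries
of the two rows of a parity-check matrix, these are the supports of the codewords of weight `k`. -/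
def zeroSumSubsets {ι M : Type*} [Fintype ι] [AddCommMonoid M] [DecidableEq M] (g h : ι → M)
    (k : ℕ) : Finset (Finset ι) :=
  {D ∈ powersetCard k univ | ∑ i ∈ D, g i = 0 ∧ ∑ i ∈ D, h i = 0}

theorem addChar_sum_eq_prod {ι A M : Type*} [AddCommMonoid A] [CommMonoid M] (ψ : AddChar A M)
    (D : Finset ι) (g : ι → A) : ψ (∑ i ∈ D, g i) = ∏ i ∈ D, ψ (g i) :=
  map_prod ψ.toMonoidHom (fun i => Multiplicative.ofAdd (g i)) D

theorem addChar_mul_self {A M : Type*} [Ring A] [CharP A 2] [Monoid M]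
    (ψ : AddChar A M) (x : A) : ψ x * ψ x = 1 := by
  rw [← AddChar.map_add_eq_mul, CharTwo.add_self_eq_zero, AddChar.map_zero_eq_one]

theorem sum_sum_aeval_esymm_addChar {ι F R : Type*} [Fintype ι] [CommRing F] [Fintype F]
    [DecidableEq F] [CommRing R] [IsDomain R] {ψ : AddChar F R} (hψ : ψ.IsPrimitive) (g h : ι → F)
    (k : ℕ) :
    ∑ a, ∑ b, MvPolynomial.aeval (fun i => ψ (a * g i + b * h i)) (MvPolynomial.esymm ι R k) =
      Fintype.card F ^ 2 * #(zeroSumSubsets g h k) := by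
  have expand (a b : F) :
      MvPolynomial.aeval (fun i => ψ (a * g i + b * h i)) (MvPolynomial.esymm ι R k) =
        ∑ D ∈ powersetCard k univ, ψ (a * ∑ i ∈ D, g i) * ψ (b * ∑ i ∈ D, h i) := by
    simp only [MvPolynomial.esymm, map_sum, map_prod, MvPolynomial.aeval_X, mul_sum,
      addChar_sum_eq_prod, prod_mul_distrib, AddChar.map_add_eq_mul]
  calc ∑ a, ∑ b, MvPolynomial.aeval (fun i => ψ (a * g i + b * h i)) (MvPolynomial.esymm ι R k)
      = ∑ D ∈ powersetCard k univ,
          (∑ a, ψ (a * ∑ i ∈ D, g i)) * ∑ b, ψ (b * ∑ i ∈ D, h i) := by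
        simp only [expand, sum_mul_sum]
        rw [sum_congr rfl fun a _ => sum_comm, sum_comm]
    _ = ∑ D ∈ powersetCard k univ,
          if ∑ i ∈ D, g i = 0 ∧ ∑ i ∈ D, h i = 0 then (Fintype.card F : R) ^ 2 else 0 := by
        refine sum_congr rfl fun D _ => ?_
        simp only [AddChar.sum_mulShift _ hψ, Nat.cast_ite, Nat.cast_zero,
          ite_zero_mul_ite_zero, sq]
    _ = Fintype.card F ^ 2 * #(zeroSumSubsets g h k) := by
        rw [← sum_filter, sum_const, nsmul_eq_mul, mul_comm, zeroSumSubsets]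

end Orthogonality

section QuadraticSigns

variable {V R : Type*} [AddCommGroup V] [CommRing R]

/-- A sign-valued function `f` is quadratic with polarization `B` if `f (x + y) f x f y` is the
bicharacter `B`, written here as a homomorphism into the dual group. This is `(-1) ^ q` for an
`𝔽₂`-valued quadratic form `q` with polar form `B`. -/
structure IsQuadraticSign (f : V → R) (B : V →+ AddChar V R) : Prop where
  mul_self : ∀ x, f x * f x = 1
  map_add : ∀ x y, f (x + y) = f x * f y * B y x

namespace IsQuadraticSign

variable [Fintype V] {f : V → R} {B : V →+ AddChar V R}

open Classical in
theorem sum_sq [IsDomain R] (hf : IsQuadraticSign f B) :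
    (∑ x, f x) ^ 2 = Nat.card V * ∑ y : B.ker, f y := by
  calc (∑ x, f x) ^ 2 = ∑ x, ∑ y, f x * f (x + y) := by
        rw [sq, sum_mul_sum]
        exact sum_congr rfl fun x _ => (Equiv.sum_comp (Equiv.addLeft x) fun y => f x * f y).symm
    _ = ∑ y, f y * ∑ x, B y x := by
        rw [sum_comm]
        simp only [mul_sum]
        refine sum_congr rfl fun y _ => sum_congr rfl fun x _ => ?_
        rw [hf.map_add, mul_assoc, ← mul_assoc, hf.mul_self, one_mul]
    _ = ∑ y, if y ∈ B.ker then Nat.card V * f y else 0 := by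
        simp only [AddChar.sum_eq_ite, AddMonoidHom.mem_ker, mul_ite, mul_zero, mul_comm,
          Nat.card_eq_fintype_card]
    _ = Nat.card V * ∑ y : B.ker, f y := by
        rw [← sum_filter, ← mul_sum, sum_subtype _ (p := (· ∈ B.ker)) (by simp)]

open Classical in
theorem sum_ker_sq (hf : IsQuadraticSign f B) :
    (∑ y : B.ker, f y) ^ 2 = Nat.card B.ker * ∑ y : B.ker, f y := by
  have mul_sum_eq (z : B.ker) : f z * ∑ y : B.ker, f y = ∑ y : B.ker, f y := by
    rw [mul_sum, ← Equiv.sum_comp (Equiv.addRight z) fun y : B.ker => f y]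
    refine sum_congr rfl fun y _ => ?_
    rw [Equiv.coe_addRight, AddSubgroup.coe_add, hf.map_add, AddMonoidHom.mem_ker.mp z.2,
      AddChar.zero_apply, mul_one, mul_comm]
  rw [sq, sum_mul, sum_congr rfl fun z _ => mul_sum_eq z]
  simp

theorem sum_pow_two_mul_succ [IsDomain R] (hf : IsQuadraticSign f B) (j : ℕ) :
    (∑ x, f x) ^ (2 * (j + 1)) = (Nat.card V * Nat.card B.ker) ^ j * (∑ x, f x) ^ 2 := by
  induction j with
  | zero => simp
  | succ j ih =>
    have sum_pow_four : (∑ x, f x) ^ 4 = Nat.card V * Nat.card B.ker * (∑ x, f x) ^ 2 := by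
      classical
      linear_combination ((∑ x, f x) ^ 2 + Nat.card V * ∑ y : B.ker, f y
        - Nat.card V * Nat.card B.ker) * hf.sum_sq + (Nat.card V : R) ^ 2 * hf.sum_ker_sq
    rw [mul_add, pow_add, ih]
    linear_combination (Nat.card V * Nat.card B.ker : R) ^ j * sum_pow_four

end IsQuadraticSign

end QuadraticSigns

section GoldSigns

theorem addChar_pow_two_pow {A M : Type*} [Semiring A] [Monoid M] {ψ : AddChar A M}
    (hψ : ∀ x, ψ (x ^ 2) = ψ x) (e : ℕ) (x : A) : ψ (x ^ 2 ^ e) = ψ x := by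
  induction e with
  | zero => simp
  | succ e ih => rw [pow_succ, pow_mul, hψ, ih]

variable {F R : Type*} [Field F] [CharP F 2] [CommRing R]

theorem sum_sum_mul_addChar_sq [Fintype F] [IsDomain R] {ψ : AddChar F R} (hψ : ψ.IsPrimitive)
    (f : F → R) :
    ∑ b, (∑ x, f x * ψ (b * x)) ^ 2 = Fintype.card F * ∑ x, f x ^ 2 := by
  classical
  calc ∑ b, (∑ x, f x * ψ (b * x)) ^ 2
      = ∑ x, ∑ y, f x * f y * ∑ b, ψ (b * (x + y)) := by
        simp only [sq, sum_mul_sum]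
        rw [sum_comm, sum_congr rfl fun x _ => sum_comm]
        simp only [mul_sum, mul_add, AddChar.map_add_eq_mul, mul_mul_mul_comm (f _)]
    _ = ∑ x, ∑ y, if x = y then Fintype.card F * f x ^ 2 else 0 := by
        refine sum_congr rfl fun x _ => sum_congr rfl fun y _ => ?_
        rw [AddChar.sum_mulShift _ hψ, CharTwo.add_eq_zero]
        split_ifs with h
        · rw [h]; ring
        · simp
    _ = Fintype.card F * ∑ x, f x ^ 2 := by simp [mul_sum]

/-- The sign `ψ (a x ^ (1 + 2 ^ e) + b x)`; for the canonical additive character `ψ` these are, up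
to a global sign, the words of the dual of the extended code. -/
def goldSign (ψ : AddChar F R) (e : ℕ) (a b x : F) : R :=
  ψ (a * x ^ (1 + 2 ^ e) + b * x)

/-- The polarization of `goldSign ψ e a b`, which does not depend on `b`. -/
def goldPolar (ψ : AddChar F R) (e : ℕ) (a : F) : F →+ AddChar F R :=
  AddMonoidHom.mk' (fun y => ψ.compAddMonoidHom <|
    AddMonoidHom.mk' (fun x => a * (x * y ^ 2 ^ e + x ^ 2 ^ e * y)) fun x x' => by
      rw [add_pow_char_pow]; ring) fun y y' => by
    ext x
    rw [AddChar.add_apply]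
    simp only [AddChar.compAddMonoidHom_apply, AddMonoidHom.mk'_apply, ← AddChar.map_add_eq_mul]
    rw [add_pow_char_pow]
    ring_nf

theorem goldPolar_apply (ψ : AddChar F R) (e : ℕ) (a y x : F) :
    goldPolar ψ e a y x = ψ (a * (x * y ^ 2 ^ e + x ^ 2 ^ e * y)) := rfl

theorem isQuadraticSign_goldSign (ψ : AddChar F R) (e : ℕ) (a b : F) :
    IsQuadraticSign (goldSign ψ e a b) (goldPolar ψ e a) where
  mul_self _ := addChar_mul_self ψ _
  map_add x y := by
    simp only [goldSign, goldPolar_apply, ← AddChar.map_add_eq_mul]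
    rw [pow_add, add_pow_char_pow]
    ring_nf

theorem mem_ker_goldPolar [PerfectRing F 2] {ψ : AddChar F R} (hψ : ψ.IsPrimitive)
    (hψ_sq : ∀ x, ψ (x ^ 2) = ψ x) {e : ℕ} {a y : F} :
    y ∈ (goldPolar ψ e a).ker ↔ a * y + a ^ 2 ^ e * y ^ 2 ^ (2 * e) = 0 := by
  have adjoint (x : F) :
      goldPolar ψ e a y x = ψ ((a * y + a ^ 2 ^ e * y ^ 2 ^ (2 * e)) * x ^ 2 ^ e) := by
    rw [goldPolar_apply, mul_add, AddChar.map_add_eq_mul,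
      ← addChar_pow_two_pow hψ_sq e (a * (x * y ^ 2 ^ e)), ← AddChar.map_add_eq_mul, two_mul,
      pow_add, pow_mul]
    ring_nf
  rw [AddMonoidHom.mem_ker]
  constructor
  · intro h
    by_contra hne
    refine hψ hne ?_
    ext z
    obtain ⟨x, rfl⟩ := (iterateFrobeniusEquiv F 2 e).surjective z
    rw [AddChar.mulShift_apply, iterateFrobeniusEquiv_apply, iterateFrobenius_def, ← adjoint, h]
    rfl
  · intro h
    ext x
    rw [adjoint, h, zero_mul, AddChar.map_zero_eq_one, AddChar.zero_apply]

theorem sum_sum_sum_goldSign_pow [Fintype F] [IsDomain R] {ψ : AddChar F R} (hψ : ψ.IsPrimitive)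
    (e j : ℕ) :
    ∑ a, ∑ b, (∑ x, goldSign ψ e a b x) ^ (2 * (j + 1)) =
      (Fintype.card F : R) ^ (j + 2) * ∑ a, (Nat.card (goldPolar ψ e a).ker : R) ^ j := by
  have parseval (a : F) : ∑ b, (∑ x, goldSign ψ e a b x) ^ 2 = (Fintype.card F : R) ^ 2 := by
    simp only [goldSign, AddChar.map_add_eq_mul]
    rw [sum_sum_mul_addChar_sq hψ]
    simp [sq, addChar_mul_self]
  simp only [(isQuadraticSign_goldSign ψ e _ _).sum_pow_two_mul_succ, ← mul_sum, parseval]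
  rw [mul_sum]
  refine sum_congr rfl fun a _ => ?_
  rw [Nat.card_eq_fintype_card]
  ring

theorem exists_isPrimitive_addChar_sq (F : Type*) [Field F] [Finite F] [CharP F 2] :
    ∃ ψ : AddChar F ℤ, ψ.IsPrimitive ∧ ∀ x, ψ (x ^ 2) = ψ x := by
  have := ZMod.algebra F 2
  let χ : AddChar (ZMod 2) ℤ := AddChar.zmodChar 2 (ζ := -1) (by norm_num)
  refine ⟨χ.compAddMonoidHom (Algebra.trace (ZMod 2) F).toAddMonoidHom,
    AddChar.IsPrimitive.of_ne_one fun h => ?_, fun x => ?_⟩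
  · obtain ⟨x, hx⟩ := Algebra.trace_surjective (ZMod 2) F 1
    have value : (-1 : ℤ) ^ (1 : ZMod 2).val = 1 := by
      simpa [χ, hx, AddChar.zmodChar_apply] using DFunLike.congr_fun h x
    exact absurd value (by decide)
  · have trace_sq : Algebra.trace (ZMod 2) F (x ^ 2) = Algebra.trace (ZMod 2) F x := by
      simpa using Algebra.trace_eq_of_algEquiv
        (FiniteField.frobeniusAlgEquivOfAlgebraic (ZMod 2) F) x
    exact congrArg χ trace_sq

end GoldSigns

section FibreCounts

theorem card_filter_pow_eq_of_mem_range {G : Type*} [CommGroup G] [IsCyclic G] [Fintype G]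
    [DecidableEq G] {d : ℕ} {g : G} (hg : ∃ x, x ^ d = g) :
    #{x : G | x ^ d = g} = (Fintype.card G).gcd d := by
  have fibre_one := MonoidHom.card_fiber_eq_of_mem_range (powMonoidHom d : G →* G) hg ⟨1, map_one _⟩
  simp only [powMonoidHom_apply] at fibre_one
  rw [fibre_one, ← Nat.card_eq_fintype_card, ← IsCyclic.card_powMonoidHom_ker,
    ← Fintype.card_subtype, ← Nat.card_eq_fintype_card]
  rfl

theorem sum_one_add_pow_of_eq_zero_or_eq {ι R : Type*} [Fintype ι] [CommRing R] {N : ι → R} {c : R}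
    (hN : ∀ i, N i = 0 ∨ N i = c) (j : ℕ) :
    ∑ i, (1 + N i) ^ j = Fintype.card ι + (∑ i, N i) * ∑ k ∈ range j, (1 + c) ^ k := by
  have interpolate (i : ι) : (1 + N i) ^ j = 1 + N i * ∑ k ∈ range j, (1 + c) ^ k := by
    rcases hN i with h | h
    · simp [h]
    · have := geom_sum_mul (1 + c) j
      rw [h]
      linear_combination -this
  simp [interpolate, sum_add_distrib, sum_mul]

variable {G : Type*} [CommGroup G] [IsCyclic G] [Fintype G] [DecidableEq G] {s t : ℕ}

theorem card_filter_pow_mul_pow_eq_one (hts : t ∣ s) (y : G) :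
    #{u : G | u ^ t * y ^ s = 1} = (Fintype.card G).gcd t := by
  obtain ⟨k, rfl⟩ := hts
  rw [← card_filter_pow_eq_of_mem_range ⟨(y ^ k)⁻¹, rfl⟩]
  simp only [mul_eq_one_iff_eq_inv, inv_pow, ← pow_mul, mul_comm k]

theorem sum_one_add_card_filter_pow_mul_pow_eq_one_pow (hts : t ∣ s) (j : ℕ) :
    ∑ u : G, (1 + (#{y : G | u ^ t * y ^ s = 1} : ℤ)) ^ j = Fintype.card G *
      (1 + (Fintype.card G).gcd t * ∑ k ∈ range j, (1 + ((Fintype.card G).gcd s : ℤ)) ^ k) := by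
  have card_solutions (u : G) : (#{y : G | u ^ t * y ^ s = 1} : ℤ) = 0 ∨
      (#{y : G | u ^ t * y ^ s = 1} : ℤ) = (Fintype.card G).gcd s := by
    simp only [mul_eq_one_iff_eq_inv']
    by_cases h : ∃ y : G, y ^ s = (u ^ t)⁻¹
    · exact Or.inr (congrArg _ (card_filter_pow_eq_of_mem_range h))
    · push Not at h
      simp [h]
  have sum_solutions : ∑ u : G, (#{y : G | u ^ t * y ^ s = 1} : ℤ) =
      Fintype.card G * (Fintype.card G).gcd t := by
    simp only [card_filter, Nat.cast_sum]
    rw [sum_comm]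
    simp only [← Nat.cast_sum, ← card_filter, card_filter_pow_mul_pow_eq_one hts]
    simp
  rw [sum_one_add_pow_of_eq_zero_or_eq card_solutions, sum_solutions]
  ring

end FibreCounts

section GoldRadicals

theorem sum_eq_add_sum_units {G₀ M : Type*} [GroupWithZero G₀] [Fintype G₀] [DecidableEq G₀]
    [AddCommMonoid M] (f : G₀ → M) : ∑ x, f x = f 0 + ∑ u : G₀ˣ, f u := by
  rw [← add_sum_erase univ f (mem_univ 0), ← Equiv.sum_comp unitsEquivNeZero.symm]
  simp only [unitsEquivNeZero_symm_apply, Units.val_mk0]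
  rw [← sum_subtype (univ.erase 0) (by simp) f]

variable {F R : Type*} [Field F] [CharP F 2] [CommRing R]

theorem goldPolar_zero (ψ : AddChar F R) (e : ℕ) : goldPolar ψ e 0 = 0 := by
  ext y x
  simp [goldPolar_apply]

variable [Fintype F]

theorem card_ker_goldPolar_units [DecidableEq F] {ψ : AddChar F R} (hψ : ψ.IsPrimitive)
    (hψ_sq : ∀ x, ψ (x ^ 2) = ψ x) (e : ℕ) (u : Fˣ) :
    Nat.card (goldPolar ψ e (u : F)).ker =
      1 + #{y : Fˣ | u ^ (2 ^ e - 1) * y ^ (2 ^ (2 * e) - 1) = 1} := by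
  have ker_iff (y : Fˣ) : (y : F) ∈ (goldPolar ψ e (u : F)).ker ↔
      u ^ (2 ^ e - 1) * y ^ (2 ^ (2 * e) - 1) = 1 := by
    rw [mem_ker_goldPolar hψ hψ_sq, CharTwo.add_eq_zero]
    norm_cast
    rw [← pow_sub_one_mul (by positivity) u, ← pow_sub_one_mul (by positivity) y,
      mul_mul_mul_comm, eq_comm, mul_eq_right]
  rw [Nat.card_eq_fintype_card, Fintype.card_subtype, card_filter, sum_eq_add_sum_units,
    card_filter]
  simp [ker_iff]

theorem sum_card_ker_goldPolar_pow {ψ : AddChar F R} (hψ : ψ.IsPrimitive)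
    (hψ_sq : ∀ x, ψ (x ^ 2) = ψ x) {m e d : ℕ} (hF : Fintype.card F = 2 ^ m)
    (hd : m.gcd e = d) (h2d : m.gcd (2 * e) = 2 * d) (j : ℕ) :
    ∑ a, (Nat.card (goldPolar ψ e a).ker : ℤ) ^ j =
      (2 ^ m) ^ j + (2 ^ m - 1) * (1 + (2 ^ d - 1) * ∑ k ∈ range j, ((2 ^ d) ^ 2) ^ k) := by
  classical
  have card_units : Fintype.card Fˣ = 2 ^ m - 1 := by rw [Fintype.card_units, hF]
  have zero_term : Nat.card (goldPolar ψ e 0).ker = 2 ^ m := by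
    rw [goldPolar_zero, AddMonoidHom.ker_zero, AddSubgroup.card_top, Nat.card_eq_fintype_card, hF]
  have dvd : 2 ^ e - 1 ∣ 2 ^ (2 * e) - 1 := Nat.pow_sub_one_dvd_pow_sub_one 2 ⟨2, mul_comm 2 e⟩
  rw [sum_eq_add_sum_units, zero_term]
  simp only [card_ker_goldPolar_units hψ hψ_sq, Nat.cast_add, Nat.cast_one]
  rw [sum_one_add_card_filter_pow_mul_pow_eq_one_pow dvd, card_units]
  simp only [Nat.pow_sub_one_gcd_pow_sub_one, hd, h2d]
  push_cast [Nat.one_le_two_pow]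
  ring_nf

end GoldRadicals

section WeightEightCount

variable {F : Type*} [Field F] [CharP F 2] [Fintype F] {m e d : ℕ}

theorem sum_sum_sum_goldSign_pow_eq {ψ : AddChar F ℤ} (hψ : ψ.IsPrimitive)
    (hψ_sq : ∀ x, ψ (x ^ 2) = ψ x) (hF : Fintype.card F = 2 ^ m)
    (hd : m.gcd e = d) (h2d : m.gcd (2 * e) = 2 * d) (j : ℕ) :
    ∑ a, ∑ b, (∑ x, goldSign ψ e a b x) ^ (2 * (j + 1)) = (2 ^ m) ^ (j + 2) *
      ((2 ^ m) ^ j + (2 ^ m - 1) * (1 + (2 ^ d - 1) * ∑ k ∈ range j, ((2 ^ d) ^ 2) ^ k)) := by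
  rw [sum_sum_sum_goldSign_pow hψ, sum_card_ker_goldPolar_pow hψ hψ_sq hF hd h2d, hF]
  push_cast
  rfl

theorem factorial_mul_card_zeroSumSubsets_eight [DecidableEq F] (hF : Fintype.card F = 2 ^ m)
    (hd : m.gcd e = d) (h2d : m.gcd (2 * e) = 2 * d) {q Q : ℤ} (hq : q = 2 ^ m)
    (hQ : Q = 2 ^ d) :
    Nat.factorial 8 * #(zeroSumSubsets (fun x : F => x ^ (1 + 2 ^ e)) (fun x => x) 8) =
      q * (q - 1) * (q ^ 4 - 27 * q ^ 3
        + (Q ^ 5 - Q ^ 4 - 27 * Q ^ 3 + 27 * Q ^ 2 + 183 * Q - 20) * q ^ 2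
        + (112 * Q ^ 3 - 112 * Q ^ 2 - 1428 * Q + 1380) * q + (2464 * Q - 3408)) := by
  obtain ⟨ψ, hψ, hψ_sq⟩ := exists_isPrimitive_addChar_sq F
  have hFq : (Fintype.card F : ℤ) = q := by rw [hF, hq]; norm_cast
  have q_ne_zero : q ≠ 0 := by rw [hq]; positivity
  have esymm_eight (a b : F) := factorial_mul_aeval_esymm_eight_of_mul_self_eq_one
    (isQuadraticSign_goldSign ψ e a b).mul_self rfl hFq
  have moment (j : ℕ) := sum_sum_sum_goldSign_pow_eq hψ hψ_sq hF hd h2d j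
  rw [← hq, ← hQ] at moment
  have moment_two : ∑ a, ∑ b, (∑ x, goldSign ψ e a b x) ^ 2 = q ^ 3 :=
    (moment 0).trans (by simp; ring)
  have moment_four : ∑ a, ∑ b, (∑ x, goldSign ψ e a b x) ^ 4 = q ^ 3 * (q + (q - 1) * Q) :=
    (moment 1).trans (by simp)
  have moment_six : ∑ a, ∑ b, (∑ x, goldSign ψ e a b x) ^ 6 =
      q ^ 4 * (q ^ 2 + (q - 1) * (1 + (Q - 1) * (1 + Q ^ 2))) :=
    (moment 2).trans (by simp [sum_range_succ])
  have moment_eight : ∑ a, ∑ b, (∑ x, goldSign ψ e a b x) ^ 8 =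
      q ^ 5 * (q ^ 3 + (q - 1) * (1 + (Q - 1) * (1 + Q ^ 2 + (Q ^ 2) ^ 2))) :=
    (moment 3).trans (by simp [sum_range_succ])
  have sum_esymm : ∑ a, ∑ b, MvPolynomial.aeval (goldSign ψ e a b) (MvPolynomial.esymm F ℤ 8) =
      q ^ 2 * #(zeroSumSubsets (fun x : F => x ^ (1 + 2 ^ e)) (fun x => x) 8) := by
    rw [← hFq]
    exact sum_sum_aeval_esymm_addChar hψ _ _ 8
  refine mul_left_cancel₀ (pow_ne_zero 2 q_ne_zero) ?_
  calc q ^ 2 * (Nat.factorial 8 *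
        #(zeroSumSubsets (fun x : F => x ^ (1 + 2 ^ e)) (fun x => x) 8) : ℤ)
      = ∑ a, ∑ b, Nat.factorial 8 *
          MvPolynomial.aeval (goldSign ψ e a b) (MvPolynomial.esymm F ℤ 8) := by
        simp only [← mul_sum, sum_esymm, mul_left_comm]
    _ = _ := by
        simp only [esymm_eight, sum_add_distrib, sum_sub_distrib, ← mul_sum, moment_two,
          moment_four, moment_six, moment_eight, sum_const, card_univ, nsmul_eq_mul, hFq]
        ring

end WeightEightCount

section BinaryWords

variable {ι : Type*} [Fintype ι]

/-- The support of a binary word, the set through which words are identified with subsets of the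
index type. -/
def wordSupport (c : ι → ZMod 2) : Finset ι :=
  {i | c i ≠ 0}

theorem card_wordSupport (c : ι → ZMod 2) : #(wordSupport c) = hammingNorm c := rfl

theorem wordSupport_bijective : Function.Bijective (wordSupport (ι := ι)) := by
  classical
  have eq_iff : ∀ a b : ZMod 2, (a ≠ 0 ↔ b ≠ 0) → a = b := by decide
  refine ⟨fun c c' h => funext fun i => eq_iff _ _ ?_,
    fun D => ⟨fun i => if i ∈ D then 1 else 0, ?_⟩⟩
  · simpa [wordSupport] using Finset.ext_iff.mp h i
  · ext i
    simp [wordSupport]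

theorem sum_algebraMap_mul_eq_sum_wordSupport {R : Type*} [Semiring R] [Algebra (ZMod 2) R]
    (c : ι → ZMod 2) (x : ι → R) :
    ∑ i, algebraMap (ZMod 2) R (c i) * x i = ∑ i ∈ wordSupport c, x i := by
  have eq_one : ∀ a : ZMod 2, a ≠ 0 → a = 1 := by decide
  rw [wordSupport, sum_filter]
  refine sum_congr rfl fun i _ => ?_
  split_ifs with h
  · simp [eq_one _ h]
  · simp [not_not.mp h]

theorem sum_eq_hammingNorm (c : ι → ZMod 2) : ∑ i, c i = hammingNorm c := by
  simpa [card_wordSupport] using sum_algebraMap_mul_eq_sum_wordSupport c fun _ => (1 : ZMod 2)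

theorem card_zeroSumSubsets_comp {κ M : Type*} [Fintype κ] [AddCommMonoid M] [DecidableEq M]
    (g h : κ → M) (σ : ι ≃ κ) (k : ℕ) :
    #(zeroSumSubsets (fun i => g (σ i)) (fun i => h (σ i)) k) = #(zeroSumSubsets g h k) :=
  card_equiv σ.finsetCongr fun D => by simp [zeroSumSubsets]

end BinaryWords

section Code

theorem minpoly_dvd_codePoly_iff {F : Type*} [Field F] [Algebra (ZMod 2) F] {n : ℕ}
    (c : Fin n → ZMod 2) (x : F) :
    minpoly (ZMod 2) x ∣ codePoly c ↔ ∑ i, algebraMap (ZMod 2) F (c i) * x ^ (i : ℕ) = 0 := by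
  rw [minpoly.dvd_iff, codePoly, map_sum]
  simp

-- The multiplicative maps `x ↦ x * x ^ 2 ^ e` and `x ↦ x ^ 2 ^ i` agree at `α`, hence at its power
-- `α + 1`; expanding there with the additivity of Frobenius leaves `α ^ 2 ^ e + α = 0`.
theorem pow_two_pow_eq_self_of_pow_one_add_two_pow_eq {F : Type*} [Field F] [CharP F 2] {α : F}
    {k : ℕ} (hk : α ^ k = α + 1) {e i : ℕ} (h : α ^ (1 + 2 ^ e) = α ^ 2 ^ i) :
    α ^ 2 ^ e = α := by
  have agree : (α + 1) ^ (1 + 2 ^ e) = (α + 1) ^ 2 ^ i := by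
    rw [← hk, ← pow_mul, ← pow_mul, mul_comm k, mul_comm k, pow_mul, pow_mul, h]
  rw [pow_add, pow_one, add_pow_char_pow, add_pow_char_pow, one_pow, one_pow, ← h, pow_add,
    pow_one] at agree
  rw [← CharTwo.add_eq_zero]
  linear_combination agree

variable {m e : ℕ} {α : GaloisField 2 m}

/-- The column label `α ^ i` of coordinate `i` of the extended code, with the label `0` for the
last, parity-check coordinate. -/
noncomputable def codePoint (α : GaloisField 2 m) (i : Fin (2 ^ m)) : GaloisField 2 m :=
  if (i : ℕ) < 2 ^ m - 1 then α ^ (i : ℕ) else 0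

theorem ne_zero_of_orderOf_eq_two_pow_sub_one (hm : m ≠ 0) (hα : orderOf α = 2 ^ m - 1) :
    α ≠ 0 := by
  rintro rfl
  have := Nat.one_lt_two_pow hm
  rw [orderOf_zero] at hα
  omega

theorem codePoint_bijective (hm : m ≠ 0) (hα : orderOf α = 2 ^ m - 1) :
    Function.Bijective (codePoint α) := by
  have pow_ne_zero (i : ℕ) : α ^ i ≠ 0 :=
    pow_ne_zero i (ne_zero_of_orderOf_eq_two_pow_sub_one hm hα)
  refine (Nat.bijective_iff_injective_and_card _).mpr ⟨fun i j hij => Fin.ext ?_, ?_⟩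
  · unfold codePoint at hij
    split_ifs at hij with hi hj hj
    · exact pow_injOn_Iio_orderOf (hα ▸ hi) (hα ▸ hj) hij
    · exact absurd hij (pow_ne_zero _)
    · exact absurd hij.symm (pow_ne_zero _)
    · omega
  · rw [GaloisField.card 2 m hm, Nat.card_eq_fintype_card, Fintype.card_fin]

theorem sum_castLE_eq_sum_codePoint (c : Fin (2 ^ m) → ZMod 2) {k : ℕ} (hk : k ≠ 0) :
    ∑ i : Fin (2 ^ m - 1), algebraMap (ZMod 2) (GaloisField 2 m)
        (c (Fin.castLE (Nat.sub_le _ _) i)) * (α ^ k) ^ (i : ℕ) =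
      ∑ i, algebraMap (ZMod 2) (GaloisField 2 m) (c i) * codePoint α i ^ k := by
  refine Fintype.sum_of_injective (Fin.castLE (Nat.sub_le _ _)) (Fin.castLE_injective _) _ _
    (fun i hi => ?_) fun i => ?_
  · have : ¬ (i : ℕ) < 2 ^ m - 1 := fun h => hi ⟨⟨i, h⟩, rfl⟩
    simp [codePoint, this, hk]
  · simp [codePoint, pow_right_comm α k]

theorem pow_two_pow_ne_self_of_not_dvd (hm : m ≠ 0) (hme : ¬ m ∣ e)
    (hα : orderOf α = 2 ^ m - 1) : α ^ 2 ^ e ≠ α := by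
  intro fixed
  have pow_eq_one : α ^ (2 ^ e - 1) = 1 := by
    refine mul_right_cancel₀ (ne_zero_of_orderOf_eq_two_pow_sub_one hm hα) ?_
    rw [pow_sub_one_mul (by positivity), fixed, one_mul]
  have gcd_eq := Nat.gcd_eq_left (orderOf_dvd_of_pow_eq_one pow_eq_one)
  rw [hα, Nat.pow_sub_one_gcd_pow_sub_one] at gcd_eq
  have := Nat.one_le_two_pow (n := m)
  have := Nat.one_le_two_pow (n := m.gcd e)
  exact hme (Nat.gcd_eq_left_iff_dvd.mp (Nat.pow_right_injective le_rfl (by grind)))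

theorem isCoprime_minpoly_minpoly_pow (hm : m ≠ 0) (hme : ¬ m ∣ e) (hα : orderOf α = 2 ^ m - 1) :
    IsCoprime (minpoly (ZMod 2) α) (minpoly (ZMod 2) (α ^ (1 + 2 ^ e))) := by
  have isIntegral (x : GaloisField 2 m) : IsIntegral (ZMod 2) x := Algebra.IsIntegral.isIntegral x
  rw [(minpoly.irreducible (isIntegral α)).coprime_iff_not_dvd]
  intro dvd
  have minpoly_eq := eq_of_monic_of_associated (minpoly.monic (isIntegral _))
    (minpoly.monic (isIntegral _)) <| (minpoly.irreducible (isIntegral α)).associated_of_dvd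
      (minpoly.irreducible (isIntegral (α ^ (1 + 2 ^ e)))) dvd
  have root : aeval (α ^ (1 + 2 ^ e)) (minpoly (ZMod 2) α) = 0 := by
    rw [minpoly_eq, minpoly.aeval]
  obtain ⟨τ, hτ⟩ := minpoly.exists_algEquiv_of_root' (isIntegral α).isAlgebraic root
  obtain ⟨⟨i, _⟩, rfl⟩ :=
    (FiniteField.bijective_frobeniusAlgEquivOfAlgebraic_pow (ZMod 2) (GaloisField 2 m)).2 τ
  have conjugate : α ^ 2 ^ i = α ^ (1 + 2 ^ e) := by
    simpa [FiniteField.coe_frobeniusAlgEquivOfAlgebraic_iterate] using hτ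
  refine pow_two_pow_ne_self_of_not_dvd hm hme hα ?_
  obtain ⟨k, hk⟩ := (codePoint_bijective hm hα).2 (α + 1)
  unfold codePoint at hk
  split_ifs at hk
  · exact pow_two_pow_eq_self_of_pow_one_add_two_pow_eq hk conjugate.symm
  · rw [CharTwo.add_eq_zero.mp hk.symm, one_pow]

theorem mem_CE_iff (h : IsCoprime (minpoly (ZMod 2) α) (minpoly (ZMod 2) (α ^ (1 + 2 ^ e))))
    (c : Fin (2 ^ m - 1) → ZMod 2) :
    c ∈ CE m e α ↔
      ∑ i, algebraMap (ZMod 2) (GaloisField 2 m) (c i) * α ^ (i : ℕ) = 0 ∧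
      ∑ i, algebraMap (ZMod 2) (GaloisField 2 m) (c i) * (α ^ (1 + 2 ^ e)) ^ (i : ℕ) = 0 := by
  rw [← minpoly_dvd_codePoly_iff, ← minpoly_dvd_codePoly_iff]
  exact ⟨fun hc => ⟨(dvd_mul_right _ _).trans hc, (dvd_mul_left _ _).trans hc⟩,
    fun hc => h.mul_dvd hc.1 hc.2⟩

theorem mem_CEbar_iff (h : IsCoprime (minpoly (ZMod 2) α) (minpoly (ZMod 2) (α ^ (1 + 2 ^ e))))
    (c : Fin (2 ^ m) → ZMod 2) :
    c ∈ CEbar m e α ↔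
      (∑ i ∈ wordSupport c, codePoint α i ^ (1 + 2 ^ e) = 0 ∧
        ∑ i ∈ wordSupport c, codePoint α i = 0) ∧ (hammingNorm c : ZMod 2) = 0 := by
  have column_sum := sum_castLE_eq_sum_codePoint (α := α) c one_ne_zero
  simp only [pow_one] at column_sum
  rw [CEbar, Set.mem_ofPred_eq, mem_CE_iff h, column_sum,
    sum_castLE_eq_sum_codePoint c (by positivity), sum_eq_hammingNorm,
    sum_algebraMap_mul_eq_sum_wordSupport, sum_algebraMap_mul_eq_sum_wordSupport,
    and_comm (a := ∑ i ∈ wordSupport c, codePoint α i = 0)]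

open Classical in
theorem ncard_CEbar_of_even
    (h : IsCoprime (minpoly (ZMod 2) α) (minpoly (ZMod 2) (α ^ (1 + 2 ^ e))))
    {k : ℕ} (hk : Even k) :
    {c | c ∈ CEbar m e α ∧ hammingNorm c = k}.ncard =
      #(zeroSumSubsets (fun i => codePoint α i ^ (1 + 2 ^ e)) (codePoint α) k) := by
  have preimage : {c | c ∈ CEbar m e α ∧ hammingNorm c = k} = wordSupport ⁻¹'
      (zeroSumSubsets (fun i => codePoint α i ^ (1 + 2 ^ e)) (codePoint α) k : Set _) := by
    ext c
    have parity (hc : hammingNorm c = k) : (hammingNorm c : ZMod 2) = 0 := by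
      rw [hc]; exact (ZMod.natCast_eq_zero_iff_even).mpr hk
    simp only [Set.mem_ofPred_eq, Set.mem_preimage, mem_coe, zeroSumSubsets, mem_filter,
      mem_powersetCard_univ, card_wordSupport, mem_CEbar_iff h]
    tauto
  rw [preimage, Set.ncard_preimage_of_injective_subset_range wordSupport_bijective.injective
    (by simp [wordSupport_bijective.surjective.range_eq]), Set.ncard_coe_finset]

theorem not_dvd_of_gcd_two_mul_eq {d : ℕ} (hm : m ≠ 0) (hd : m.gcd e = d)
    (h2d : m.gcd (2 * e) = 2 * d) : ¬ m ∣ e := by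
  intro h
  rw [Nat.gcd_eq_left h] at hd
  rw [Nat.gcd_eq_left (h.mul_left 2)] at h2d
  omega

theorem gcd_two_mul_eq_four (hm4 : 4 ∣ m) (hgcd : m.gcd e = 2) : m.gcd (2 * e) = 4 := by
  obtain ⟨a, rfl⟩ := hm4
  have half : (2 * a).gcd e = 2 :=
    Nat.dvd_antisymm ((Nat.gcd_dvd_gcd_of_dvd_left e ⟨2, by ring⟩).trans hgcd.dvd)
      (Nat.dvd_gcd ⟨a, rfl⟩ (hgcd.symm.dvd.trans (Nat.gcd_dvd_right _ _)))
  rw [show 4 * a = 2 * (2 * a) by ring, Nat.gcd_mul_left, half]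

theorem number_of_weight_eight_codewords_general {d : ℕ} (hm : m ≠ 0) (hd : m.gcd e = d)
    (h2d : m.gcd (2 * e) = 2 * d) (hα : orderOf α = 2 ^ m - 1) {q Q : ℤ} (hq : q = 2 ^ m)
    (hQ : Q = 2 ^ d) :
    40320 * ({c | c ∈ CEbar m e α ∧ hammingNorm c = 8}.ncard : ℤ) =
      q * (q - 1) * (q ^ 4 - 27 * q ^ 3
        + (Q ^ 5 - Q ^ 4 - 27 * Q ^ 3 + 27 * Q ^ 2 + 183 * Q - 20) * q ^ 2
        + (112 * Q ^ 3 - 112 * Q ^ 2 - 1428 * Q + 1380) * q + (2464 * Q - 3408)) := by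
  classical
  have := Fintype.ofFinite (GaloisField 2 m)
  have card_field : Fintype.card (GaloisField 2 m) = 2 ^ m := by
    rw [← Nat.card_eq_fintype_card, GaloisField.card 2 m hm]
  have coprime := isCoprime_minpoly_minpoly_pow hm (not_dvd_of_gcd_two_mul_eq hm hd h2d) hα
  rw [ncard_CEbar_of_even coprime (by decide),
    ← factorial_mul_card_zeroSumSubsets_eight card_field hd h2d hq hQ,
    ← card_zeroSumSubsets_comp _ _ (Equiv.ofBijective _ (codePoint_bijective hm hα))]
  rfl

theorem mul_weight_eight_formula_eq (hm : 4 ≤ m) :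
    (128 : ℤ) * (2 ^ (m - 3) * (2 ^ m - 1) * (2 ^ (4 * m - 4) - 27 * 2 ^ (3 * m - 4)
        + 23 * 2 ^ (2 * m - 1) + 261 * 2 ^ (m - 2) + 403)) =
      2 ^ m * (2 ^ m - 1) * ((2 ^ m) ^ 4 - 27 * (2 ^ m) ^ 3 + 184 * (2 ^ m) ^ 2
        + 1044 * 2 ^ m + 6448) := by
  obtain ⟨l, rfl⟩ := Nat.exists_eq_add_of_le hm
  rw [show 4 * (4 + l) - 4 = 12 + 4 * l by omega, show 3 * (4 + l) - 4 = 8 + 3 * l by omega,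
    show 2 * (4 + l) - 1 = 7 + 2 * l by omega, show 4 + l - 2 = 2 + l by omega,
    show 4 + l - 3 = 1 + l by omega]
  ring

end Code

/-- For `m ≡ 0 (mod 4)` (with `m ≥ 4`) and `1 ≤ e ≤ m/2` with
`gcd(m,e) = 2`, the number of weight-8 codewords of `C̄_E` is
`Ā₈ = 2^{m−3}(2^m − 1)(2^{4m−4} − 27·2^{3m−4} + 23·2^{2m−1} + 261·2^{m−2} + 403)/315`. -/
theorem number_of_weight_eight_codewords
    (m e : ℕ) (hm4 : m % 4 = 0) (hm : 4 ≤ m)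
    (he1 : 1 ≤ e) (heM : 2 * e ≤ m) (hgcd : Nat.gcd m e = 2)
    (α : GaloisField 2 m) (hα : orderOf α = 2 ^ m - 1) :
    (315 : ℤ) * {c : Fin (2 ^ m) → ZMod 2 | c ∈ CEbar m e α ∧ hammingNorm c = 8}.ncard =
      2 ^ (m - 3) * (2 ^ m - 1) *
        (2 ^ (4 * m - 4) - 27 * 2 ^ (3 * m - 4) + 23 * 2 ^ (2 * m - 1)
          + 261 * 2 ^ (m - 2) + 403) := by
  have general := number_of_weight_eight_codewords_general (by omega) hgcd
    (gcd_two_mul_eq_four (Nat.dvd_of_mod_eq_zero hm4) hgcd) hα rfl rfl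
  linarith [mul_weight_eight_formula_eq hm]
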